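/- Let A be a Lie conformal algebra and M an A-module with a commutative associative product on which ∂^M and all a_λ (a ∈ A) act by derivations. Then: (a) the bracket [a⊗m(x), b⊗n(x)] = [a_{∂_{x₁}} b] ⊗ m(x₁)n(x)|_{x₁=x} − a ⊗ ⟨n(x₁), b_{λ₁} m(x)⟩ + b ⊗ ⟨m(x₁), a_{λ₁} n(x)⟩ on A ⊗ M[[x]] induces a well-defined Lie algebra bracket on 𝔤 = ΠΓ̃₁(A,M); (b) the operator ∂(a⊗m(x)) = a⊗(∂^M − ∂_x)m(x) is a derivation of this Lie algebra, and 𝔤^∂ = ΠΓ₁(A,M) = Ker ∂ is a Lie subalgebra of 𝔤. -/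

import Mathlib

namespace LCC

/-! ### Index utilities -/

/-- Skip one index: the increasing enumeration of `{0,…,k} \ {i}`. -/
def skip1 (i r : ℕ) : ℕ := if r < i then r else r + 1

/-- Skip two indices `i < j`: the increasing enumeration of `{0,…,k+1} \ {i,j}`. -/
def skip2 (i j r : ℕ) : ℕ := if r < i then r else if r + 1 < j then r + 1 else r + 2

/-- Remove the `i`-th entry of a tuple. -/
def rm1 {α : Type*} {k : ℕ} (i : ℕ) (a : Fin (k+1) → α) : Fin k → α :=
  fun r => a ⟨skip1 i r.1, by have := r.2; unfold skip1; split <;> omega⟩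

/-- Remove the `i`-th and `j`-th entries (for `i < j`) of a tuple. -/
def rm2 {α : Type*} {k : ℕ} (i j : ℕ) (a : Fin (k+2) → α) : Fin k → α :=
  fun r => a ⟨skip2 i j r.1, by
    have := r.2; unfold skip2; split
    · omega
    · split <;> omega⟩

/-- Total weight of a multi-index. -/
def wt {k : ℕ} (ν : Fin k → ℕ) : ℕ := ∑ r, ν r

/-- The multinomial coefficient `(|m| + s)! / (∏ mᵣ! · s!)`. -/
def mnom {K : ℕ} (m : Fin K → ℕ) (s : ℕ) : ℕ :=
  (wt m + s).factorial / ((∏ r, (m r).factorial) * s.factorial)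

variable (F : Type*) [Field F]

/-- A Lie conformal algebra over `F`: an `F[∂]`-module `A` (given by the linear
endomorphism `D`), together with a `λ`-bracket recorded through its coefficients:
`[a_λ b] = ∑ₙ (br a b n) λⁿ`, satisfying sesquilinearity, skew-symmetry and the
Jacobi identity (all written in terms of coefficients of the `λ`-expansions). -/
structure LCA (A : Type*) [AddCommGroup A] [Module F A] where
  D : A →ₗ[F] A
  br : A →ₗ[F] A →ₗ[F] (ℕ → A)
  br_fin : ∀ a b, (Function.support (br a b)).Finite
  sesq_left_zero : ∀ a b, br (D a) b 0 = 0
  sesq_left : ∀ a b n, br (D a) b (n+1) = - br a b n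
  sesq_right : ∀ a b n, br a (D b) n
      = D (br a b n) + (if n = 0 then 0 else br a b (n-1))
  skew : ∀ a b m, br a b m
      = - ∑ᶠ n, ((-1 : F)^n * (n.choose m : F)) • ((D ^ (n - m)) (br b a n))
  jacobi : ∀ a b c m n,
      br a (br b c n) m - br b (br a c m) n
        = ∑ j ∈ Finset.range (m+1), (((n+j).choose j : F)) • br (br a b (m-j)) c (n+j)

/-- A module over a Lie conformal algebra: an `F[∂]`-module `M` with a `λ`-action
of `A`, given through the coefficients `a_λ v = ∑ₙ (act a v n) λⁿ`, satisfying
sesquilinearity and the Jacobi identity. -/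
structure LCAMod {A : Type*} [AddCommGroup A] [Module F A] (L : LCA F A)
    (M : Type*) [AddCommGroup M] [Module F M] where
  D : M →ₗ[F] M
  act : A →ₗ[F] M →ₗ[F] (ℕ → M)
  act_fin : ∀ a m, (Function.support (act a m)).Finite
  sesq_left_zero : ∀ a m, act (L.D a) m 0 = 0
  sesq_left : ∀ a m n, act (L.D a) m (n+1) = - act a m n
  sesq_right : ∀ a m n, act a (D m) n
      = D (act a m n) + (if n = 0 then 0 else act a m (n-1))
  jacobi : ∀ a b v p q,
      act a (act b v q) p - act b (act a v p) q
        = ∑ j ∈ Finset.range (p+1), (((q+j).choose j : F)) • act (L.br a b (p-j)) v (q+j)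

variable {F}
variable {A M : Type*} [AddCommGroup A] [Module F A] [AddCommGroup M] [Module F M]

/-- Torsion elements of the `F[∂]`-module `A`. -/
def IsTor (L : LCA F A) (x : A) : Prop :=
  ∃ p : Polynomial F, p ≠ 0 ∧ Polynomial.aeval L.D p x = 0

/-- `A` decomposes, as an `F[∂]`-module, into the direct sum of its torsion and
a free complementary submodule `F[∂] ⊗ U`. -/
def Decomposes (L : LCA F A) : Prop :=
  ∃ U : Submodule F A, Function.Bijective
    (fun p : {x : A // IsTor L x} × (ℕ →₀ U) =>
      (p.1 : A) + p.2.sum (fun n u => (L.D ^ n) (u : A)))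

variable {L : LCA F A}

/-- The condition for a coefficient family
`γ : A^{⊗ k} → F[λ₁,…,λ_k] ⊗ M` (recorded via the coefficients
`γ a ν` of `λ^ν`) to be a basic `k`-cochain: `F`-multilinearity, polynomiality,
sesquilinearity (A1) and skew-symmetry (A2). -/
structure IsGamma (R : LCAMod F L M) (k : ℕ)
    (γ : (Fin k → A) → (Fin k → ℕ) → M) : Prop where
  map_add : ∀ (a : Fin k → A) (i : Fin k) (x y : A),
    γ (Function.update a i (x + y)) = γ (Function.update a i x) + γ (Function.update a i y)
  map_smul : ∀ (a : Fin k → A) (i : Fin k) (r : F) (x : A),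
    γ (Function.update a i (r • x)) = r • γ (Function.update a i x)
  fin : ∀ a, (Function.support (γ a)).Finite
  sesq : ∀ (a : Fin k → A) (i : Fin k) (x : A) (ν : Fin k → ℕ),
    γ (Function.update a i (L.D x)) ν
      = (if ν i = 0 then 0 else - γ (Function.update a i x) (Function.update ν i (ν i - 1)))
  skew : ∀ (a : Fin k → A) (ν : Fin k → ℕ) (σ : Equiv.Perm (Fin k)),
    γ (a ∘ σ) (ν ∘ σ) = ((Equiv.Perm.sign σ : ℤˣ) : ℤ) • γ a ν

/-- The action of `∂` on basic cochains: `(∂γ) = (∂^M + λ₁ + ⋯ + λ_k) ∘ γ`,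
in terms of coefficients. -/
def GammaD (R : LCAMod F L M) {k : ℕ} (γ : (Fin k → A) → (Fin k → ℕ) → M) :
    (Fin k → A) → (Fin k → ℕ) → M :=
  fun a ν => R.D (γ a ν)
    + ∑ i : Fin k, (if ν i = 0 then 0 else γ a (Function.update ν i (ν i - 1)))

/-- Substitution of the auxiliary variable `μ` by
`λ† = −λ₁ − ⋯ − λ_K − ∂^M` (with `∂^M` moved to the left) in a polynomial
`q` in `λ₁,…,λ_K, μ`, recorded through its coefficients `q ρ n` of `λ^ρ μ^n`.
The result is the coefficient of `λ^ν`. -/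
noncomputable def substDag {K : ℕ} (DM : M →ₗ[F] M)
    (q : (Fin K → ℕ) → ℕ → M) (ν : Fin K → ℕ) : M :=
  ∑ ρ ∈ Finset.Iic ν, ∑ᶠ s : ℕ,
    (((-1 : F)^(wt (fun r => ν r - ρ r) + s)) * (mnom (fun r => ν r - ρ r) s : F)) •
      ((DM ^ s) (q ρ (wt (fun r => ν r - ρ r) + s)))

/-- The condition for a coefficient family
`c : A^{⊗(k+1)} → F[λ₁,…,λ_k] ⊗ M` to be a `(k+1)`-`λ`-bracket
(an element of `C^{k+1}(A,M)`), i.e. conditions B1, B2, B3 of the paper,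
written in terms of the coefficients `c a ν` of `λ^ν`. -/
structure IsCBr (R : LCAMod F L M) (k : ℕ)
    (c : (Fin (k+1) → A) → (Fin k → ℕ) → M) : Prop where
  map_add : ∀ (a : Fin (k+1) → A) (i : Fin (k+1)) (x y : A),
    c (Function.update a i (x + y)) = c (Function.update a i x) + c (Function.update a i y)
  map_smul : ∀ (a : Fin (k+1) → A) (i : Fin (k+1)) (r : F) (x : A),
    c (Function.update a i (r • x)) = r • c (Function.update a i x)
  fin : ∀ a, (Function.support (c a)).Finite
  sesq₁ : ∀ (a : Fin (k+1) → A) (i : Fin k) (x : A) (ν : Fin k → ℕ),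
    c (Function.update a i.castSucc (L.D x)) ν
      = (if ν i = 0 then 0
         else - c (Function.update a i.castSucc x) (Function.update ν i (ν i - 1)))
  sesq₂ : ∀ (a : Fin (k+1) → A) (x : A) (ν : Fin k → ℕ),
    c (Function.update a (Fin.last k) (L.D x)) ν
      = R.D (c (Function.update a (Fin.last k) x) ν)
        + ∑ i : Fin k, (if ν i = 0 then 0
            else c (Function.update a (Fin.last k) x) (Function.update ν i (ν i - 1)))
  skew : ∀ (a : Fin (k+1) → A) (ν : Fin k → ℕ) (σ : Equiv.Perm (Fin (k+1))),
    c a ν = ((Equiv.Perm.sign σ : ℤˣ) : ℤ) • substDag R.D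
      (fun ρ n =>
        if (Fin.snoc ρ n : Fin (k+1) → ℕ) (σ (Fin.last k)) = 0 then
          c (a ∘ σ) (fun i : Fin k => (Fin.snoc ρ n : Fin (k+1) → ℕ) (σ i.castSucc))
        else 0) ν

/-- The subspace `C̄`: poly-`λ`-brackets vanishing whenever one of the arguments is
a torsion element of `A`. -/
def VanishOnTorsion (L : LCA F A) {k : ℕ}
    (c : (Fin (k+1) → A) → (Fin k → ℕ) → M) : Prop :=
  ∀ a ν, (∃ i, IsTor L (a i)) → c a ν = 0

/-- The differential `d : C⁰ = M/∂M → C¹`, `(d∫m)(a) = a_{−∂^M} m`. -/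
noncomputable def dZero (R : LCAMod F L M) (m : M) :
    (Fin 1 → A) → (Fin 0 → ℕ) → M :=
  fun a _ => ∑ᶠ n, ((-1 : F)^n) • ((R.D ^ n) (R.act (a 0) m n))

/-- The second term of the differential `d` of the complex of
poly-`λ`-brackets (the double sum over `i < j` in the paper's formula). -/
noncomputable def dPair (L : LCA F A) (R : LCAMod F L M) :
    ∀ {k : ℕ}, ((Fin (k+1) → A) → (Fin k → ℕ) → M) →
      (Fin (k+2) → A) → (Fin (k+1) → ℕ) → M
  | 0, _, _, _ => 0
  | (s+1), c, a, ν =>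
    ∑ i : Fin (s+2), ∑ j : Fin (s+2),
      if i < j then
        ((-1 : F)^(s + i.1 + j.1 + 1)) •
          ∑ p ∈ Finset.range (ν i + 1),
            substDag R.D
              (fun ρ n =>
                if ρ i = 0 ∧ ρ j = 0 then
                  c (Fin.snoc (Fin.snoc (rm2 i.1 j.1 (Fin.init a)) (a (Fin.last (s+2))))
                      (L.br (a i.castSucc) (a j.castSucc) p))
                    (Fin.snoc (rm2 i.1 j.1 ρ) n)
                else 0)
              (Function.update ν i (ν i - p))
      else 0

/-- The differential `d` on the complex `C^•(A,M)` of poly-`λ`-brackets,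
written in terms of coefficients (formula (1.8) of the paper). Here `c` is a
`(k+1)`-`λ`-bracket and `dRaw c` is a `(k+2)`-`λ`-bracket. -/
noncomputable def dRaw (L : LCA F A) (R : LCAMod F L M) {k : ℕ}
    (c : (Fin (k+1) → A) → (Fin k → ℕ) → M) :
    (Fin (k+2) → A) → (Fin (k+1) → ℕ) → M :=
  fun a ν =>
    (∑ i : Fin (k+1), ((-1 : F)^i.1) •
        R.act (a i.castSucc) (c (rm1 i.1 a) (rm1 i.1 ν)) (ν i))
    + dPair L R c a ν
    + ((-1 : F)^(k+1)) • substDag R.D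
        (fun ρ n =>
          if ρ (Fin.last k) = 0 then
            R.act (a (Fin.last (k+1))) (c (Fin.init a) (Fin.init ρ)) n
          else 0) ν
    + ∑ i : Fin (k+1), ((-1 : F)^(i.1+1)) •
        c (Fin.snoc (rm1 i.1 (Fin.init a)) (L.br (a i.castSucc) (a (Fin.last (k+1))) (ν i)))
          (rm1 i.1 ν)

/-- The second term of the differential `δ` of the basic complex
`Γ̃^•(A,M)` (the double sum over `i < j`). -/
noncomputable def deltaPair (L : LCA F A) (R : LCAMod F L M) :
    ∀ {k : ℕ}, ((Fin k → A) → (Fin k → ℕ) → M) →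
      (Fin (k+1) → A) → (Fin (k+1) → ℕ) → M
  | 0, _, _, _ => 0
  | (s+1), γ, a, ν =>
    ∑ i : Fin (s+2), ∑ j : Fin (s+2),
      if i < j then
        ((-1 : F)^(s + i.1 + j.1)) •
          ∑ p ∈ Finset.range (ν i + 1),
            ((((ν i - p) + ν j).choose (ν i - p) : F)) •
              γ (Fin.snoc (rm2 i.1 j.1 a) (L.br (a i) (a j) p))
                (Fin.snoc (rm2 i.1 j.1 ν) ((ν i - p) + ν j))
      else 0

/-- The differential `δ` of the basic Lie conformal algebra cohomology complex
`Γ̃^•(A,M)`, written in terms of coefficients of the `λ`-expansions. -/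
noncomputable def deltaRaw (L : LCA F A) (R : LCAMod F L M) {k : ℕ}
    (γ : (Fin k → A) → (Fin k → ℕ) → M) :
    (Fin (k+1) → A) → (Fin (k+1) → ℕ) → M :=
  fun a ν =>
    (∑ i : Fin (k+1), ((-1 : F)^i.1) •
        R.act (a i) (γ (rm1 i.1 a) (rm1 i.1 ν)) (ν i))
    + deltaPair L R γ a ν

/-- The map `ψ^{k+1} : Γ̃^{k+1}(A,M) → C^{k+1}(A,M)`,
`{a₁ λ₁ ⋯ a_k λ_k a_{k+1}}_{ψ(γ)} = γ_{λ₁,…,λ_k,λ†}(a₁,…,a_{k+1})`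
where `λ† = −λ₁ − ⋯ − λ_k − ∂^M` (with `∂^M` moved to the left). -/
noncomputable def psiRaw (R : LCAMod F L M) {k : ℕ}
    (γ : (Fin (k+1) → A) → (Fin (k+1) → ℕ) → M) :
    (Fin (k+1) → A) → (Fin k → ℕ) → M :=
  fun a ν => substDag R.D (fun ρ n => γ a (Fin.snoc ρ n)) ν

/-- The map `χ` on "polynomial duals": given
`φ : Hom(F[λ₁,…,λ_K], M)` (recorded through its values `φ ν` on monomials),
`chiMap DM φ` is `φ ∘ (substitution λ_{K+1} ↦ −λ₁ − ⋯ − λ_K + ∂^M)`,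
with `∂^M` moved to the left. -/
noncomputable def chiMap {K : ℕ} (DM : M →ₗ[F] M) (φ : (Fin K → ℕ) → M) :
    (Fin (K+1) → ℕ) → M :=
  fun ν =>
    ∑ m ∈ Finset.Iic (fun _ : Fin K => ν (Fin.last K)),
      if wt m ≤ ν (Fin.last K) then
        (((-1 : F)^(wt m)) * (mnom m (ν (Fin.last K) - wt m) : F)) •
          ((DM ^ (ν (Fin.last K) - wt m)) (φ (fun r => Fin.init ν r + m r)))
      else 0

section Product

variable (F) {N : Type*} [CommRing N] [Algebra F N]

/-- The exterior multiplication of basic cochains, in coefficient form. -/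
noncomputable def wedge {h k : ℕ}
    (α : (Fin h → A) → (Fin h → ℕ) → N) (β : (Fin k → A) → (Fin k → ℕ) → N) :
    (Fin (h+k) → A) → (Fin (h+k) → ℕ) → N :=
  fun a ν =>
    ((h.factorial * k.factorial : F))⁻¹ •
      ∑ σ : Equiv.Perm (Fin (h+k)),
        ((Equiv.Perm.sign σ : ℤˣ) : ℤ) •
          (α (fun i => a (σ (Fin.castAdd k i))) (fun i => ν (σ (Fin.castAdd k i))) *
           β (fun i => a (σ (Fin.natAdd h i))) (fun i => ν (σ (Fin.natAdd h i))))

/-- Contraction of a basic cochain by (a generator of) a basic `h`-chain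
`b ⊗ φ ∈ A^{⊗h} ⊗ Hom(F[λ₁,…,λ_h], N)`. -/
noncomputable def iotaG {h k : ℕ} (b : Fin h → A) (φ : (Fin h → ℕ) → N)
    (γ : (Fin (h + k) → A) → (Fin (h + k) → ℕ) → N) :
    (Fin k → A) → (Fin k → ℕ) → N :=
  fun a ν => ∑ᶠ ρ : Fin h → ℕ, φ ρ * γ (Fin.append b a) (Fin.append ρ ν)

/-- The action of `∂` on (generators of) the space of basic `h`-chains:
`∂(a ⊗ φ) = a ⊗ ((−λ₁^* − ⋯ − λ_h^* + ∂)φ)`. -/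
def chainD (R : LCAMod F L N) {h : ℕ} (φ : (Fin h → ℕ) → N) : (Fin h → ℕ) → N :=
  fun ρ => R.D (φ ρ) - ∑ i : Fin h, φ (Function.update ρ i (ρ i + 1))

/-- Contraction by a basic 1-chain `a₀ ⊗ m(x)`, where `m(x) = ∑ m_k x^k` is recorded
by its coefficient function `m : ℕ → N` (formula (3.23) of the paper, using the
pairing `⟨x^p, λ^q⟩ = q! δ_{p,q}`). -/
noncomputable def iota1 {k : ℕ} (a₀ : A) (m : ℕ → N)
    (γ : (Fin (k+1) → A) → (Fin (k+1) → ℕ) → N) : (Fin k → A) → (Fin k → ℕ) → N :=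
  fun a ν => ∑ᶠ q : ℕ, (q.factorial : F) • (m q * γ (Fin.cons a₀ a) (Fin.cons q ν))

/-- The Lie derivative `L_ξ = δ ∘ ι_ξ + ι_ξ ∘ δ` along a basic 1-chain. -/
noncomputable def lie1 (R : LCAMod F L N) {k : ℕ} (a₀ : A) (m : ℕ → N)
    (γ : (Fin (k+1) → A) → (Fin (k+1) → ℕ) → N) : (Fin (k+1) → A) → (Fin (k+1) → ℕ) → N :=
  deltaRaw L R (iota1 F a₀ m γ) + iota1 F a₀ m (deltaRaw L R γ)

end Product

end LCC

namespace LCC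

open scoped TensorProduct

variable (F : Type*) [Field F] {A : Type*} [AddCommGroup A] [Module F A]
  {N : Type*} [CommRing N] [Algebra F N] {L : LCA F A}

/-- Coefficient series of `(∂_x^p m)(x) · n(x)`. -/
noncomputable def g1ser (m n : ℕ → N) (p : ℕ) : ℕ → N :=
  fun k => ∑ i ∈ Finset.range (k+1), (((i+p).descFactorial p) • m (i+p)) * n (k-i)

/-- Coefficient series of `⟨m(x₁), b_{λ₁} n(x)⟩`, with `⟨x^p, λ^q⟩ = q! δ_{p,q}`. -/
noncomputable def pairSer (R : LCAMod F L N) (m : ℕ → N) (b₀ : A) (n : ℕ → N) : ℕ → N :=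
  fun k => ∑ᶠ q : ℕ, (q.factorial : F) • (m q * R.act b₀ (n k) q)

/-- `∂_x` acting on power series `N[[x]]`, in coefficient form. -/
noncomputable def derX : (ℕ → N) →ₗ[F] (ℕ → N) where
  toFun m := fun k => (k + 1 : F) • m (k+1)
  map_add' := by intro x y; funext k; simp [smul_add]
  map_smul' := by intro r x; funext k; simp; rw [smul_comm]

/-- `∂^M` acting coefficientwise on power series `N[[x]]`. -/
noncomputable def coefD (R : LCAMod F L N) : (ℕ → N) →ₗ[F] (ℕ → N) where
  toFun m := fun k => R.D (m k)
  map_add' := by intro x y; funext k; simp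
  map_smul' := by intro r x; funext k; simp

/-- The relation operator `∂ ⊗ 1 + 1 ⊗ ∂_x` on `A ⊗ N[[x]]`; the space of basic
1-chains is `Γ̃₁ = (A ⊗ N[[x]]) / Im(∂ ⊗ 1 + 1 ⊗ ∂_x)`. -/
noncomputable def chainRel (L : LCA F A) (N : Type*) [CommRing N] [Algebra F N] :
    (A ⊗[F] (ℕ → N)) →ₗ[F] (A ⊗[F] (ℕ → N)) :=
  LinearMap.rTensor (ℕ → N) L.D + LinearMap.lTensor A (derX F)

/-- The space of basic 1-chains `Γ̃₁(A,N) = (A ⊗ N[[x]])/(∂⊗1 + 1⊗∂_x)(A ⊗ N[[x]])`. -/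
noncomputable abbrev Gamma1 (L : LCA F A) (N : Type*) [CommRing N] [Algebra F N] :=
  (A ⊗[F] (ℕ → N)) ⧸ LinearMap.range (chainRel F L N)

/-- The raw value of the Lie bracket of two generators of `Γ̃₁`:
`[a⊗m(x), b⊗n(x)] = [a_{∂_{x₁}}b] ⊗ m(x₁)n(x)|_{x₁=x}
  − a ⊗ ⟨n(x₁), b_{λ₁} m(x)⟩ + b ⊗ ⟨m(x₁), a_{λ₁} n(x)⟩`. -/
noncomputable def brkGen (R : LCAMod F L N) (a : A) (m : ℕ → N) (b : A) (n : ℕ → N) :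
    A ⊗[F] (ℕ → N) :=
  (∑ᶠ p : ℕ, (L.br a b p) ⊗ₜ[F] (g1ser m n p))
    - a ⊗ₜ[F] (pairSer F R n b m) + b ⊗ₜ[F] (pairSer F R m a n)

/-- The operator `∂` on `A ⊗ N[[x]]` descending to `Γ̃₁`:
`∂(a ⊗ m(x)) = a ⊗ (∂^M − ∂_x)m(x)`. -/
noncomputable def chainPartial (R : LCAMod F L N) :
    (A ⊗[F] (ℕ → N)) →ₗ[F] (A ⊗[F] (ℕ → N)) :=
  LinearMap.lTensor A (coefD F R - derX F)

end LCC

/-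
Fix a commutative differential algebra `(V, δ)`. Replacing `λ` by `δ` turns a module `W` over `A`
into an action of `A ⊗ V` on `W ⊗ V`; it satisfies the Jacobi identity, commutes with
`∂ ⊗ 1 + 1 ⊗ δ` and vanishes on its image, and for `W = A` it is skew-symmetric modulo that image.
Take `V = M[[x]]` and `δ = ∂_x`. The pairing `ρ(a ⊗ m(x)) = ⟨m(x), a_λ ·⟩` is this action on
`M` evaluated at `x = 0`, and it plays the role of the anchor of a Lie algebroid: the bracket is
`[X, Y] = X · Y - ρ(Y) X + ρ(X) Y`, each `ρ(X)` is a derivation of every loop action, and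
`ρ([X, Y]) = [ρ(X), ρ(Y)]`. Expanding the Jacobi identity, all that is left is
`ρ(Z)X · Y + Y · ρ(Z)X`, which lies in the image of `∂ ⊗ 1 + 1 ⊗ ∂_x`.
-/

namespace LCC

open Finset
open scoped TensorProduct PowerSeries

section Polynomials

variable {F : Type*} [Field F] {A : Type*} [AddCommGroup A] [Module F A]
  {W : Type*} [AddCommGroup W] [Module F W] {L : LCA F A}

/-- The adjoint module: `A` acting on itself by its `λ`-bracket. -/
def LCA.adjoint (L : LCA F A) : LCAMod F L A where
  D := L.D
  act := L.br
  act_fin := L.br_fin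
  sesq_left_zero := L.sesq_left_zero
  sesq_left := L.sesq_left
  sesq_right := L.sesq_right
  jacobi := L.jacobi

/-- The `λ`-action `a_λ w` as an element of `F[λ] ⊗ W`, encoded as the finitely supported family
of its coefficients. -/
noncomputable def LCAMod.actPoly (R : LCAMod F L W) : A →ₗ[F] W →ₗ[F] (ℕ →₀ W) :=
  LinearMap.mk₂ F (fun a w => Finsupp.ofSupportFinite (R.act a w) (R.act_fin a w))
    (fun a b w => Finsupp.ext fun n => by simp [Finsupp.ofSupportFinite_coe])
    (fun r a w => Finsupp.ext fun n => by simp [Finsupp.ofSupportFinite_coe])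
    (fun a v w => Finsupp.ext fun n => by simp [Finsupp.ofSupportFinite_coe])
    (fun r a w => Finsupp.ext fun n => by simp [Finsupp.ofSupportFinite_coe])

@[simp]
lemma LCAMod.actPoly_apply (R : LCAMod F L W) (a : A) (w : W) (n : ℕ) :
    R.actPoly a w n = R.act a w n := rfl

lemma LCAMod.finsum_act {T : Type*} [AddCommMonoid T] (R : LCAMod F L W) (a : A) (w : W)
    (φ : ℕ → W → T) (hφ : ∀ p, φ p 0 = 0) :
    ∑ᶠ p, φ p (R.act a w p) = (R.actPoly a w).sum φ := by
  refine finsum_eq_sum_of_support_subset _ fun p hp => ?_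
  contrapose! hp
  have : R.act a w p = 0 := by simpa using hp
  simp [this, hφ]

lemma mapDomain_succ_zero (u : ℕ →₀ W) : u.mapDomain Nat.succ 0 = 0 :=
  Finsupp.mapDomain_of_notMem_range _ _ (by simp)

lemma mapDomain_succ_succ (u : ℕ →₀ W) (n : ℕ) : u.mapDomain Nat.succ (n + 1) = u n :=
  Finsupp.mapDomain_apply Nat.succ_injective u n

lemma LCAMod.actPoly_D_left (R : LCAMod F L W) (a : A) (w : W) :
    R.actPoly (L.D a) w = -(R.actPoly a w).mapDomain Nat.succ := by
  ext (_ | n)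
  · simp [R.sesq_left_zero, mapDomain_succ_zero]
  · simp [R.sesq_left, mapDomain_succ_succ]

lemma LCAMod.actPoly_D_right (R : LCAMod F L W) (a : A) (w : W) :
    R.actPoly a (R.D w) = Finsupp.mapRange.linearMap R.D (R.actPoly a w)
      + (R.actPoly a w).mapDomain Nat.succ := by
  ext (_ | n)
  · simp [R.sesq_right, mapDomain_succ_zero]
  · simp [R.sesq_right, mapDomain_succ_succ]

lemma sum_antidiagonal_single_fst_apply (D : W →ₗ[F] W) (w : W) (r : F) (n m : ℕ) :
    (∑ x ∈ antidiagonal n, (r * (n.choose x.1 : F)) • Finsupp.single x.1 ((D ^ x.2) w)) m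
      = (r * (n.choose m : F)) • (D ^ (n - m)) w := by
  rw [Finsupp.finsetSum_apply]
  obtain hnm | hmn := lt_or_ge n m
  · rw [Nat.choose_eq_zero_of_lt hnm, sum_eq_zero]
    · simp
    · intro x hx
      have : m ≠ x.1 := by simp at hx; lia
      simp [Finsupp.single_eq_of_ne this]
  · rw [sum_eq_single_of_mem (m, n - m) (by simp [hmn])]
    · simp
    · rintro ⟨i, j⟩ hx hne
      have : m ≠ i := by simp at hx hne; lia
      simp [Finsupp.single_eq_of_ne this]

lemma LCA.actPoly_skew (L : LCA F A) (a b : A) :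
    L.adjoint.actPoly a b = -(L.adjoint.actPoly b a).sum fun n c =>
      ∑ x ∈ antidiagonal n,
        ((-1 : F) ^ n * (n.choose x.1 : F)) • Finsupp.single x.1 ((L.adjoint.D ^ x.2) c) := by
  ext m
  simp only [Finsupp.neg_apply, Finsupp.sum_apply, sum_antidiagonal_single_fst_apply]
  rw [← L.adjoint.finsum_act b a
      (fun n c => ((-1 : F) ^ n * (n.choose m : F)) • (L.adjoint.D ^ (n - m)) c) (by simp)]
  exact L.skew a b m

lemma sum_antidiagonal_single_add_apply (p s m n : ℕ) (y : W) :
    (∑ x ∈ antidiagonal s, (s.choose x.1 : F) • Finsupp.single (p + x.1, x.2) y) (m, n)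
      = if p ≤ m ∧ s = m - p + n then (s.choose (m - p) : F) • y else 0 := by
  rw [Finsupp.finsetSum_apply]
  split_ifs with h
  · rw [sum_eq_single_of_mem (m - p, n) (by simp [h.2])]
    · simp [Nat.add_sub_cancel' h.1]
    · rintro ⟨i, j⟩ hx hne
      have : (m, n) ≠ (p + i, j) := by simp at hx hne ⊢; lia
      simp [Finsupp.single_eq_of_ne this]
  · refine sum_eq_zero fun x hx => ?_
    have : (m, n) ≠ (p + x.1, x.2) := by simp at hx ⊢; lia
    simp [Finsupp.single_eq_of_ne this]

lemma LCAMod.actPoly_jacobi (R : LCAMod F L W) (a b : A) (w : W) :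
    ((R.actPoly b w).sum fun q x => (R.actPoly a x).sum fun p y => Finsupp.single (p, q) y)
      - ((R.actPoly a w).sum fun p x => (R.actPoly b x).sum fun q y => Finsupp.single (p, q) y)
    = (L.adjoint.actPoly a b).sum fun p c => (R.actPoly c w).sum fun s y =>
        ∑ x ∈ antidiagonal s, (s.choose x.1 : F) • Finsupp.single (p + x.1, x.2) y := by
  ext ⟨m, n⟩
  have left_apply : ((R.actPoly b w).sum fun q x => (R.actPoly a x).sum fun p y =>
      Finsupp.single (p, q) y) (m, n) = R.act a (R.act b w n) m := by
    rw [Finsupp.sum_apply, Finsupp.sum_eq_single n, Finsupp.sum_apply, Finsupp.sum_eq_single m] <;>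
      simp +contextual [Finsupp.sum_apply]
  have right_apply : ((R.actPoly a w).sum fun p x => (R.actPoly b x).sum fun q y =>
      Finsupp.single (p, q) y) (m, n) = R.act b (R.act a w m) n := by
    rw [Finsupp.sum_apply, Finsupp.sum_eq_single m, Finsupp.sum_apply, Finsupp.sum_eq_single n] <;>
      simp +contextual [Finsupp.sum_apply]
  have bracket_apply (p : ℕ) (c : A) : ((R.actPoly c w).sum fun s y =>
      ∑ x ∈ antidiagonal s, (s.choose x.1 : F) • Finsupp.single (p + x.1, x.2) y) (m, n)
      = if p ≤ m then ((m - p + n).choose (m - p) : F) • R.act c w (m - p + n) else 0 := by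
    simp only [Finsupp.sum_apply, sum_antidiagonal_single_add_apply]
    rw [Finsupp.sum_eq_single (m - p + n)] <;> simp +contextual
  rw [Finsupp.sub_apply, left_apply, right_apply, R.jacobi, ← sum_flip]
  simp only [Finsupp.sum_apply (f := L.adjoint.actPoly a b), bracket_apply]
  rw [← L.adjoint.finsum_act a b _ (by simp),
    finsum_eq_sum_of_support_subset (s := range (m + 1)) _ fun p hp => ?_]
  · refine sum_congr rfl fun p hp => ?_
    have hpm : p ≤ m := by simpa [Nat.lt_succ_iff] using hp
    rw [if_pos hpm, Nat.sub_sub_self hpm, add_comm n]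
    rfl
  · simp at hp ⊢
    lia

end Polynomials

section Derivations

variable {F : Type*} [CommRing F] {V : Type*} [CommRing V] [Algebra F V]
  (δ : Derivation F V V)

lemma iterate_derivation_mul (n : ℕ) (f g : V) :
    δ^[n] (f * g) = ∑ x ∈ antidiagonal n, n.choose x.1 • (δ^[x.1] f * δ^[x.2] g) := by
  induction n with
  | zero => simp
  | succ n ih =>
    rw [sum_antidiagonal_choose_succ_nsmul (fun i j => δ^[i] f * δ^[j] g) n]
    simp only [Function.iterate_succ_apply', ih, map_sum, map_nsmul, Derivation.leibniz,
      smul_eq_mul, smul_add, sum_add_distrib, add_right_inj]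
    refine sum_congr rfl fun ⟨i, j⟩ hij => ?_
    rw [n.choose_symm_of_eq_add (mem_antidiagonal.1 hij).symm, mul_comm]

lemma sum_antidiagonal_iterate_derivation (n : ℕ) (f g : V) :
    ∑ x ∈ antidiagonal n, n.choose x.1 • ((-1 : F) ^ x.1 • δ^[x.2] (δ^[x.1] f * g))
      = f * δ^[n] g := by
  induction n generalizing f with
  | zero => simp
  | succ n ih =>
    rw [sum_antidiagonal_choose_succ_nsmul
      (fun i j => (-1 : F) ^ i • δ^[j] (δ^[i] f * g)) n]
    have choose_snd : ∑ x ∈ antidiagonal n,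
        n.choose x.2 • ((-1 : F) ^ (x.1 + 1) • δ^[x.2] (δ^[x.1 + 1] f * g))
        = -(δ f * δ^[n] g) := by
      rw [← ih, ← sum_neg_distrib]
      refine sum_congr rfl fun ⟨i, j⟩ hij => ?_
      simp [n.choose_symm_of_eq_add (mem_antidiagonal.1 hij).symm, pow_succ]
    have choose_fst : ∑ x ∈ antidiagonal n,
        n.choose x.1 • ((-1 : F) ^ x.1 • δ^[x.2 + 1] (δ^[x.1] f * g)) = δ (f * δ^[n] g) := by
      simp only [← ih, map_sum, map_nsmul, Derivation.map_smul, Function.iterate_succ_apply']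
    rw [choose_fst, choose_snd, Function.iterate_succ_apply', Derivation.leibniz, smul_eq_mul,
      smul_eq_mul]
    ring

end Derivations

section LoopAction

variable {F : Type*} [Field F] {A : Type*} [AddCommGroup A] [Module F A]
  {W : Type*} [AddCommGroup W] [Module F W] {L : LCA F A}
  {V : Type*} [CommRing V] [Algebra F V]

/-- The action of `A ⊗ V` on `W ⊗ V` attached to a commutative differential algebra `(V, δ)`,
given by `(a ⊗ f) · (w ⊗ g) = a_λ w ⊗ f g` with `λ` replaced by `δ` acting on `f`. -/
noncomputable def LCAMod.loopAct (R : LCAMod F L W) (δ : Derivation F V V) :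
    A ⊗[F] V →ₗ[F] W ⊗[F] V →ₗ[F] W ⊗[F] V :=
  (TensorProduct.map₂ R.actPoly (TensorProduct.mk F V V)).compr₂ <|
    TensorProduct.lift <| Finsupp.lsum F fun p =>
      (TensorProduct.mk F W V).compl₂
        (LinearMap.mul' F V ∘ₗ LinearMap.rTensor V ((δ : V →ₗ[F] V) ^ p))

/-- The operator `∂ ⊗ 1 + 1 ⊗ δ` on `W ⊗ V`. -/
noncomputable def LCAMod.totalD (R : LCAMod F L W) (δ : Derivation F V V) :
    W ⊗[F] V →ₗ[F] W ⊗[F] V :=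
  LinearMap.rTensor V R.D + LinearMap.lTensor W (δ : V →ₗ[F] V)

variable (R : LCAMod F L W) (δ : Derivation F V V)

@[simp]
lemma LCAMod.loopAct_tmul (a : A) (f : V) (w : W) (g : V) :
    R.loopAct δ (a ⊗ₜ f) (w ⊗ₜ g) = (R.actPoly a w).sum fun p x => x ⊗ₜ (δ^[p] f * g) := by
  simp [loopAct, LinearMap.finsupp_sum_apply, Module.End.pow_apply]

@[simp]
lemma LCAMod.totalD_tmul (w : W) (f : V) :
    R.totalD δ (w ⊗ₜ[F] f) = R.D w ⊗ₜ f + w ⊗ₜ δ f := by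
  simp [totalD]

lemma LCAMod.loopAct_totalD_left (X : A ⊗[F] V) (Y : W ⊗[F] V) :
    R.loopAct δ (L.adjoint.totalD δ X) Y = 0 := by
  induction X with
  | zero => simp
  | add X X' hX hX' => simp [hX, hX']
  | tmul a f =>
    induction Y with
    | zero => simp
    | add Y Y' hY hY' => simp only [map_add, hY, hY', add_zero]
    | tmul w g =>
      have adjoint_D : L.adjoint.D = L.D := rfl
      simp [adjoint_D, R.actPoly_D_left, Finsupp.sum_neg_index, Finsupp.sum_mapDomain_index,
        TensorProduct.add_tmul, TensorProduct.neg_tmul, Finsupp.sum_neg]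

lemma LCAMod.totalD_loopAct (X : A ⊗[F] V) (Y : W ⊗[F] V) :
    R.totalD δ (R.loopAct δ X Y) = R.loopAct δ X (R.totalD δ Y) := by
  induction X with
  | zero => simp
  | add X X' hX hX' => simp [hX, hX']
  | tmul a f =>
    induction Y with
    | zero => simp
    | add Y Y' hY hY' => simp only [map_add, hY, hY']
    | tmul w g =>
      simp only [loopAct_tmul, totalD_tmul, map_add, map_finsuppSum, R.actPoly_D_right]
      rw [Finsupp.sum_add_index', Finsupp.mapRange.linearMap_apply, Finsupp.sum_mapRange_index,
        Finsupp.sum_mapDomain_index]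
      · simp only [← Finsupp.sum_add]
        refine Finsupp.sum_congr fun p _ => ?_
        rw [Function.iterate_succ_apply', Derivation.leibniz, add_assoc, ← TensorProduct.tmul_add,
          smul_eq_mul, smul_eq_mul, mul_comm g, add_comm (_ * g)]
      all_goals simp [TensorProduct.add_tmul]

lemma LCAMod.loopAct_jacobi (X Y : A ⊗[F] V) (Z : W ⊗[F] V) :
    R.loopAct δ X (R.loopAct δ Y Z) - R.loopAct δ Y (R.loopAct δ X Z)
      = R.loopAct δ (L.adjoint.loopAct δ X Y) Z := by
  induction X with
  | zero => simp
  | add X X' hX hX' => simp [← hX, ← hX', sub_add_sub_comm]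
  | tmul a f =>
    induction Y with
    | zero => simp
    | add Y Y' hY hY' => simp [← hY, ← hY', sub_add_sub_comm]
    | tmul b g =>
      induction Z with
      | zero => simp
      | add Z Z' hZ hZ' => simp only [map_add, ← hZ, ← hZ', add_sub_add_comm]
      | tmul w h =>
        let Φ : (ℕ × ℕ →₀ W) →ₗ[F] W ⊗[F] V := Finsupp.lsum F fun x =>
          (TensorProduct.mk F W V).flip (δ^[x.1] f * (δ^[x.2] g * h))
        have jacobi := congrArg Φ (R.actPoly_jacobi a b w)
        simp only [map_sub, map_finsuppSum, map_sum, map_nsmul, Φ, Finsupp.lsum_single,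
          LinearMap.flip_apply, TensorProduct.mk_apply, Nat.cast_smul_eq_nsmul] at jacobi
        simp only [loopAct_tmul, map_finsuppSum, LinearMap.finsupp_sum_apply,
          iterate_derivation_mul, ← Function.iterate_add_apply, sum_mul, smul_mul_assoc, mul_assoc,
          TensorProduct.tmul_sum, TensorProduct.tmul_smul]
        simpa only [mul_left_comm, add_comm] using jacobi

lemma LCAMod.lTensor_loopAct (E : V →ₗ[F] V) (hE_mul : ∀ f g, E (f * g) = E f * g + f * E g)
    (hE : Function.Commute E δ) (X : A ⊗[F] V) (Y : W ⊗[F] V) :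
    LinearMap.lTensor W E (R.loopAct δ X Y)
      = R.loopAct δ (LinearMap.lTensor A E X) Y + R.loopAct δ X (LinearMap.lTensor W E Y) := by
  induction X with
  | zero => simp
  | add X X' hX hX' => simp only [map_add, LinearMap.add_apply, hX, hX']; abel
  | tmul a f =>
    induction Y with
    | zero => simp
    | add Y Y' hY hY' => simp only [map_add, hY, hY']; abel
    | tmul w g =>
      simp only [loopAct_tmul, LinearMap.lTensor_tmul, map_finsuppSum, ← Finsupp.sum_add,
        ← TensorProduct.tmul_add, hE_mul, (hE.iterate_right _).eq]

lemma LCAMod.lTensor_totalD (E : V →ₗ[F] V) (hE : Function.Commute E δ) (Y : W ⊗[F] V) :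
    LinearMap.lTensor W E (R.totalD δ Y) = R.totalD δ (LinearMap.lTensor W E Y) := by
  induction Y with
  | zero => simp
  | add Y Y' hY hY' => simp only [map_add, hY, hY']
  | tmul w f => simp [hE.eq f]

lemma LCAMod.mkQ_pow_D_tmul (k : ℕ) (w : W) (f : V) :
    (LinearMap.range (R.totalD δ)).mkQ ((R.D ^ k) w ⊗ₜ f)
      = (-1 : F) ^ k • (LinearMap.range (R.totalD δ)).mkQ (w ⊗ₜ δ^[k] f) := by
  induction k generalizing f with
  | zero => simp
  | succ k ih =>
    have shift : (LinearMap.range (R.totalD δ)).mkQ ((R.D ^ (k + 1)) w ⊗ₜ f)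
        = -(LinearMap.range (R.totalD δ)).mkQ ((R.D ^ k) w ⊗ₜ δ f) := by
      rw [eq_neg_iff_add_eq_zero, ← map_add, Submodule.mkQ_apply, Submodule.Quotient.mk_eq_zero]
      exact ⟨(R.D ^ k) w ⊗ₜ f, by simp [pow_succ']⟩
    rw [shift, ih, Function.iterate_succ_apply, pow_succ, mul_neg_one, neg_smul]

lemma LCAMod.sum_antidiagonal_mkQ_pow_D_tmul (n : ℕ) (w : W) (f g : V) :
    ∑ x ∈ antidiagonal n, ((-1 : F) ^ n * (n.choose x.1 : F)) •
        (LinearMap.range (R.totalD δ)).mkQ ((R.D ^ x.2) w ⊗ₜ (δ^[x.1] f * g))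
      = (LinearMap.range (R.totalD δ)).mkQ (w ⊗ₜ (δ^[n] g * f)) := by
  rw [mul_comm, ← sum_antidiagonal_iterate_derivation δ, TensorProduct.tmul_sum, map_sum]
  refine sum_congr rfl fun x hx => ?_
  have sign_mul : (-1 : F) ^ n * (-1) ^ x.2 = (-1) ^ x.1 := by
    rw [← mem_antidiagonal.mp hx, pow_add, mul_assoc, ← mul_pow]
    simp
  rw [R.mkQ_pow_D_tmul, smul_smul, mul_right_comm, sign_mul, mul_comm, mul_smul,
    Nat.cast_smul_eq_nsmul, TensorProduct.tmul_smul, TensorProduct.tmul_smul, map_nsmul, map_smul]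

lemma LCA.mkQ_loopAct_skew (L : LCA F A) (X Y : A ⊗[F] V) :
    (LinearMap.range (L.adjoint.totalD δ)).mkQ (L.adjoint.loopAct δ X Y)
      = -(LinearMap.range (L.adjoint.totalD δ)).mkQ (L.adjoint.loopAct δ Y X) := by
  induction X with
  | zero => simp
  | add X X' hX hX' => simp only [map_add, LinearMap.add_apply, hX, hX', neg_add]
  | tmul a f =>
    induction Y with
    | zero => simp
    | add Y Y' hY hY' => simp only [map_add, LinearMap.add_apply, hY, hY', neg_add]
    | tmul b g =>
      let Φ := Finsupp.lsum F fun p => (LinearMap.range (L.adjoint.totalD δ)).mkQ ∘ₗ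
        (TensorProduct.mk F A V).flip (δ^[p] f * g)
      have skew := congrArg Φ (L.actPoly_skew a b)
      simp only [map_neg, map_finsuppSum, map_sum, map_smul, Φ, Finsupp.lsum_single,
        LinearMap.comp_apply, LinearMap.flip_apply, TensorProduct.mk_apply,
        L.adjoint.sum_antidiagonal_mkQ_pow_D_tmul δ] at skew
      simp only [LCAMod.loopAct_tmul, map_finsuppSum]
      exact skew

end LoopAction

section PowerSeries

variable (F : Type*) [Field F] (N : Type*) [CommRing N] [Algebra F N]

/-- `∂_x` as an `F`-linear derivation of `N⟦X⟧`. -/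
noncomputable abbrev dX : Derivation F N⟦X⟧ N⟦X⟧ :=
  (PowerSeries.derivative N).restrictScalars F

variable {F N}

/-- The coefficientwise extension to `N⟦X⟧` of a linear endomorphism of `N`. -/
noncomputable def mapCoeff : Module.End F N →ₗ[F] Module.End F N⟦X⟧ :=
  LinearMap.mk₂ F (fun θ f => PowerSeries.mk fun k => θ (PowerSeries.coeff k f))
    (fun θ θ' f => PowerSeries.ext fun k => by simp)
    (fun r θ f => PowerSeries.ext fun k => by simp)
    (fun θ f g => PowerSeries.ext fun k => by simp)
    (fun r θ f => PowerSeries.ext fun k => by simp)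

/-- The evaluation `w ⊗ g(x) ↦ w g(0)`. -/
noncomputable def evalZero : N ⊗[F] N⟦X⟧ →ₗ[F] N :=
  LinearMap.mul' F N ∘ₗ LinearMap.lTensor N ((PowerSeries.coeff (R := N) 0).restrictScalars F)

@[simp]
lemma coeff_mapCoeff (θ : Module.End F N) (f : N⟦X⟧) (k : ℕ) :
    PowerSeries.coeff k (mapCoeff θ f) = θ (PowerSeries.coeff k f) := by
  simp [mapCoeff]

@[simp]
lemma constantCoeff_mapCoeff (θ : Module.End F N) (f : N⟦X⟧) :
    PowerSeries.constantCoeff (mapCoeff θ f) = θ (PowerSeries.constantCoeff f) := by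
  simp only [← PowerSeries.coeff_zero_eq_constantCoeff_apply, coeff_mapCoeff]

lemma mapCoeff_mul (θ : Module.End F N) (hθ : ∀ m n, θ (m * n) = θ m * n + m * θ n)
    (f g : N⟦X⟧) :
    mapCoeff θ (f * g) = mapCoeff θ f * g + f * mapCoeff θ g := by
  ext k
  simp [PowerSeries.coeff_mul, hθ, sum_add_distrib]

lemma commute_mapCoeff_dX (θ : Module.End F N) :
    Function.Commute (mapCoeff θ) (dX F N) := by
  intro f
  ext k
  simp only [Derivation.restrictScalars_apply, coeff_mapCoeff, PowerSeries.coeff_derivative,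
    ← Nat.cast_succ, ← nsmul_eq_mul', map_nsmul]

@[simp]
lemma evalZero_tmul (w : N) (g : N⟦X⟧) :
    evalZero (w ⊗ₜ[F] g) = w * PowerSeries.constantCoeff g := by
  simp [evalZero]

end PowerSeries

section Anchor

variable {F : Type*} [Field F] {A : Type*} [AddCommGroup A] [Module F A]
  {N : Type*} [CommRing N] [Algebra F N] {L : LCA F A} (R : LCAMod F L N)

/-- All `a_λ` act by derivations of the product of `N`. -/
def LCAMod.ActsByDerivations : Prop :=
  ∀ (a : A) (m n : N) (p : ℕ), R.act a (m * n) p = R.act a m p * n + m * R.act a n p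

/-- The anchor `A ⊗ N⟦X⟧ → End N`, `a ⊗ m(x) ↦ ⟨m(x), a_λ ·⟩`, by analogy with Lie algebroids;
the pairing `⟨x^p, λ^q⟩ = q! δ_{p,q}` is the action of `λ = ∂_x` followed by `x = 0`. -/
noncomputable def LCAMod.anchor : A ⊗[F] N⟦X⟧ →ₗ[F] Module.End F N :=
  ((R.loopAct (dX F N)).compl₂ ((TensorProduct.mk F N N⟦X⟧).flip 1)).compr₂ evalZero

/-- The anchor acting coefficientwise on `W ⊗ N⟦X⟧`. -/
noncomputable def LCAMod.anchorAct (W : Type*) [AddCommGroup W] [Module F W] :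
    A ⊗[F] N⟦X⟧ →ₗ[F] Module.End F (W ⊗[F] N⟦X⟧) :=
  LinearMap.lTensorHom W ∘ₗ mapCoeff ∘ₗ R.anchor

lemma LCAMod.anchor_apply (X : A ⊗[F] N⟦X⟧) (v : N) :
    R.anchor X v = evalZero (R.loopAct (dX F N) X (v ⊗ₜ 1)) := rfl

lemma LCAMod.anchor_tmul (a : A) (f : N⟦X⟧) (v : N) :
    R.anchor (a ⊗ₜ f) v
      = (R.actPoly a v).sum fun p x => x * PowerSeries.constantCoeff ((dX F N)^[p] f) := by
  simp [anchor_apply, map_finsuppSum]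

lemma LCAMod.anchorAct_eq_lTensor (W : Type*) [AddCommGroup W] [Module F W] (X : A ⊗[F] N⟦X⟧) :
    R.anchorAct W X = LinearMap.lTensor W (mapCoeff (R.anchor X)) := rfl

lemma LCAMod.anchor_totalD (X : A ⊗[F] N⟦X⟧) :
    R.anchor (L.adjoint.totalD (dX F N) X) = 0 := by
  ext v
  simp [anchor_apply, R.loopAct_totalD_left]

lemma LCAMod.evalZero_loopAct_tmul (X : A ⊗[F] N⟦X⟧) (w : N) (g : N⟦X⟧) :
    evalZero (R.loopAct (dX F N) X (w ⊗ₜ g)) = R.anchor X w * PowerSeries.constantCoeff g := by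
  induction X with
  | zero => simp
  | add X X' hX hX' => simp [hX, hX', add_mul]
  | tmul a f => simp [anchor_tmul, map_finsuppSum, Finsupp.sum_mul, mul_assoc]

lemma LCAMod.anchor_mul
    (hact : R.ActsByDerivations) (X : A ⊗[F] N⟦X⟧) (m n : N) :
    R.anchor X (m * n) = R.anchor X m * n + m * R.anchor X n := by
  induction X with
  | zero => simp
  | add X X' hX hX' => simp only [map_add, LinearMap.add_apply, hX, hX']; ring
  | tmul a f =>
    have actPoly_mul : R.actPoly a (m * n) = (R.actPoly a m).mapRange (· * n) (zero_mul n)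
        + (R.actPoly a n).mapRange (m * ·) (mul_zero m) :=
      Finsupp.ext fun p => by simp [hact a m n p]
    simp only [anchor_tmul, actPoly_mul]
    rw [Finsupp.sum_add_index' (by simp) (by simp [add_mul]), Finsupp.sum_mapRange_index (by simp),
      Finsupp.sum_mapRange_index (by simp), Finsupp.sum_mul, Finsupp.mul_sum]
    simp only [mul_right_comm, mul_assoc]

lemma evalZero_lTensor_mapCoeff (θ : Module.End F N)
    (hθ : ∀ m n, θ (m * n) = θ m * n + m * θ n) (y : N ⊗[F] N⟦X⟧) :
    θ (evalZero y) = evalZero (LinearMap.rTensor N⟦X⟧ θ y)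
      + evalZero (LinearMap.lTensor N (mapCoeff θ) y) := by
  induction y with
  | zero => simp
  | add y y' hy hy' => simp only [map_add, hy, hy']; abel
  | tmul w g => simp [hθ]

lemma LCAMod.anchor_evalZero
    (hact : R.ActsByDerivations) (X : A ⊗[F] N⟦X⟧) (y : N ⊗[F] N⟦X⟧) :
    R.anchor X (evalZero y)
      = evalZero (R.loopAct (dX F N) X y) + evalZero (R.anchorAct N X y) := by
  rw [evalZero_lTensor_mapCoeff _ (R.anchor_mul hact X), R.anchorAct_eq_lTensor]
  congr 1
  induction y with
  | zero => simp
  | add y y' hy hy' => simp only [map_add, hy, hy']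
  | tmul w g => simp [evalZero_loopAct_tmul]

lemma LCAMod.anchorAct_loopAct
    (hact : R.ActsByDerivations)
    {W : Type*} [AddCommGroup W] [Module F W] (S : LCAMod F L W) (X Y : A ⊗[F] N⟦X⟧)
    (Z : W ⊗[F] N⟦X⟧) :
    R.anchorAct W X (S.loopAct (dX F N) Y Z)
      = S.loopAct (dX F N) (R.anchorAct A X Y) Z + S.loopAct (dX F N) Y (R.anchorAct W X Z) :=
  S.lTensor_loopAct _ _ (mapCoeff_mul _ (R.anchor_mul hact X)) (commute_mapCoeff_dX _) Y Z

lemma mapCoeff_one (θ : Module.End F N) (hθ : ∀ m n, θ (m * n) = θ m * n + m * θ n) :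
    mapCoeff θ 1 = 0 := by
  have mapCoeff_one_mul := mapCoeff_mul θ hθ 1 1
  simpa using mapCoeff_one_mul

lemma LCAMod.anchor_anchor
    (hact : R.ActsByDerivations) (X Y : A ⊗[F] N⟦X⟧) (v : N) :
    R.anchor X (R.anchor Y v)
      = evalZero (R.loopAct (dX F N) X (R.loopAct (dX F N) Y (v ⊗ₜ 1)))
        + R.anchor (R.anchorAct A X Y) v := by
  have anchorAct_tmul_one : R.anchorAct N X (v ⊗ₜ 1) = 0 := by
    simp [anchorAct_eq_lTensor, mapCoeff_one _ (R.anchor_mul hact X)]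
  rw [anchor_apply R Y, R.anchor_evalZero hact, R.anchorAct_loopAct hact, anchorAct_tmul_one,
    map_zero, add_zero, anchor_apply R (R.anchorAct A X Y)]

/-- The operator `∂^M - ∂_x` on `N⟦X⟧`. -/
noncomputable def LCAMod.seriesD : Module.End F N⟦X⟧ :=
  mapCoeff R.D - (dX F N : N⟦X⟧ →ₗ[F] N⟦X⟧)

lemma LCAMod.seriesD_apply (f : N⟦X⟧) : R.seriesD f = mapCoeff R.D f - dX F N f := rfl

lemma LCAMod.seriesD_mul (hD : ∀ m n : N, R.D (m * n) = R.D m * n + m * R.D n) (f g : N⟦X⟧) :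
    R.seriesD (f * g) = R.seriesD f * g + f * R.seriesD g := by
  rw [seriesD_apply, mapCoeff_mul _ hD, Derivation.leibniz, smul_eq_mul, smul_eq_mul,
    seriesD_apply, seriesD_apply]
  ring

lemma LCAMod.commute_seriesD_dX : Function.Commute R.seriesD (dX F N) := by
  intro f
  rw [seriesD_apply, (commute_mapCoeff_dX R.D).eq, ← map_sub, seriesD_apply]

/-- The operator `a ⊗ m(x) ↦ a ⊗ (∂^M - ∂_x) m(x)` on `A ⊗ N⟦X⟧`. -/
noncomputable def LCAMod.chainDeriv : Module.End F (A ⊗[F] N⟦X⟧) :=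
  LinearMap.lTensor A R.seriesD

lemma LCAMod.D_anchor (hD : ∀ m n : N, R.D (m * n) = R.D m * n + m * R.D n)
    (X : A ⊗[F] N⟦X⟧) (v : N) :
    R.D (R.anchor X v) = R.anchor (R.chainDeriv X) v + R.anchor X (R.D v) := by
  have totalD_tmul_one : R.totalD (dX F N) (v ⊗ₜ 1) = R.D v ⊗ₜ 1 := by simp
  have seriesD_one : LinearMap.lTensor N R.seriesD (v ⊗ₜ 1) = 0 := by
    simp [seriesD_apply, mapCoeff_one _ hD]
  have rTensor_D (y : N ⊗[F] N⟦X⟧) : LinearMap.rTensor N⟦X⟧ R.D y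
      = R.totalD (dX F N) y - LinearMap.lTensor N (dX F N : N⟦X⟧ →ₗ[F] N⟦X⟧) y := by
    simp [totalD]
  have lTensor_seriesD (y : N ⊗[F] N⟦X⟧) : LinearMap.lTensor N R.seriesD y
      = LinearMap.lTensor N (mapCoeff R.D) y
        - LinearMap.lTensor N (dX F N : N⟦X⟧ →ₗ[F] N⟦X⟧) y := by
    simp [seriesD, LinearMap.lTensor_sub]
  have lTensor_loopAct := R.lTensor_loopAct (dX F N) R.seriesD (R.seriesD_mul hD)
    R.commute_seriesD_dX X (v ⊗ₜ 1)
  rw [seriesD_one, map_zero, add_zero] at lTensor_loopAct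
  rw [anchor_apply, evalZero_lTensor_mapCoeff _ hD, rTensor_D, R.totalD_loopAct, totalD_tmul_one,
    map_sub, sub_add_eq_add_sub, add_sub_assoc, ← map_sub, ← lTensor_seriesD, lTensor_loopAct,
    add_comm]
  rfl

/-- The formula for the bracket of `1`-chains, on `A ⊗ N⟦X⟧`. -/
noncomputable def LCAMod.chainBracket : A ⊗[F] N⟦X⟧ →ₗ[F] A ⊗[F] N⟦X⟧ →ₗ[F] A ⊗[F] N⟦X⟧ :=
  L.adjoint.loopAct (dX F N) - (R.anchorAct A).flip + (R.anchorAct A : _ →ₗ[F] _ →ₗ[F] _)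

lemma LCAMod.chainBracket_apply (X Y : A ⊗[F] N⟦X⟧) :
    R.chainBracket X Y
      = L.adjoint.loopAct (dX F N) X Y - R.anchorAct A Y X + R.anchorAct A X Y := rfl

lemma LCAMod.anchor_chainBracket
    (hact : R.ActsByDerivations) (X Y : A ⊗[F] N⟦X⟧) :
    R.anchor (R.chainBracket X Y) = R.anchor X * R.anchor Y - R.anchor Y * R.anchor X := by
  ext v
  rw [LinearMap.sub_apply, Module.End.mul_apply, Module.End.mul_apply, R.anchor_anchor hact,
    R.anchor_anchor hact, add_sub_add_comm, ← map_sub, R.loopAct_jacobi, chainBracket_apply,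
    map_add, map_sub, LinearMap.add_apply, LinearMap.sub_apply, anchor_apply]
  abel

lemma LCAMod.anchorAct_chainBracket
    (hact : R.ActsByDerivations) (X Y Z : A ⊗[F] N⟦X⟧) :
    R.anchorAct A (R.chainBracket X Y) Z
      = R.anchorAct A X (R.anchorAct A Y Z) - R.anchorAct A Y (R.anchorAct A X Z) := by
  have mapCoeff_sub_mul (θ θ' : Module.End F N) : mapCoeff (θ * θ' - θ' * θ)
      = mapCoeff θ * mapCoeff θ' - mapCoeff θ' * mapCoeff θ := by
    ext f k
    simp
  simp only [anchorAct_eq_lTensor, R.anchor_chainBracket hact, mapCoeff_sub_mul,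
    LinearMap.lTensor_sub, LinearMap.lTensor_mul, LinearMap.sub_apply, Module.End.mul_apply]

lemma LCAMod.anchorAct_totalD_left (X Y : A ⊗[F] N⟦X⟧) :
    R.anchorAct A (L.adjoint.totalD (dX F N) X) Y = 0 := by
  simp [anchorAct_eq_lTensor, anchor_totalD]

lemma LCAMod.anchorAct_totalD_right (X Y : A ⊗[F] N⟦X⟧) :
    R.anchorAct A X (L.adjoint.totalD (dX F N) Y)
      = L.adjoint.totalD (dX F N) (R.anchorAct A X Y) :=
  L.adjoint.lTensor_totalD _ _ (commute_mapCoeff_dX _) Y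

lemma LCAMod.chainBracket_totalD_left (X Y : A ⊗[F] N⟦X⟧) :
    R.chainBracket (L.adjoint.totalD (dX F N) X) Y
      = L.adjoint.totalD (dX F N) (-R.anchorAct A Y X) := by
  rw [chainBracket_apply, L.adjoint.loopAct_totalD_left, anchorAct_totalD_right,
    anchorAct_totalD_left, add_zero, zero_sub, map_neg]

lemma LCAMod.chainBracket_totalD_right (X Y : A ⊗[F] N⟦X⟧) :
    R.chainBracket X (L.adjoint.totalD (dX F N) Y)
      = L.adjoint.totalD (dX F N) (L.adjoint.loopAct (dX F N) X Y + R.anchorAct A X Y) := by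
  rw [chainBracket_apply, ← L.adjoint.totalD_loopAct, anchorAct_totalD_right,
    anchorAct_totalD_left, sub_zero, map_add]

lemma LCAMod.chainDeriv_totalD (X : A ⊗[F] N⟦X⟧) :
    R.chainDeriv (L.adjoint.totalD (dX F N) X) = L.adjoint.totalD (dX F N) (R.chainDeriv X) :=
  L.adjoint.lTensor_totalD _ _ R.commute_seriesD_dX X

lemma LCAMod.chainDeriv_anchorAct (hD : ∀ m n : N, R.D (m * n) = R.D m * n + m * R.D n)
    (X Y : A ⊗[F] N⟦X⟧) :
    R.chainDeriv (R.anchorAct A X Y)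
      = R.anchorAct A (R.chainDeriv X) Y + R.anchorAct A X (R.chainDeriv Y) := by
  have seriesD_mapCoeff : R.seriesD * mapCoeff (R.anchor X)
      = mapCoeff (R.anchor (R.chainDeriv X)) + mapCoeff (R.anchor X) * R.seriesD := by
    refine LinearMap.ext fun f => ?_
    simp only [Module.End.mul_apply, LinearMap.add_apply, seriesD_apply, map_sub,
      (commute_mapCoeff_dX _).eq f]
    ext k
    simp only [map_add, map_sub, coeff_mapCoeff, R.D_anchor hD]
    abel
  have lTensor_seriesD_mapCoeff := congrArg (LinearMap.lTensor A) seriesD_mapCoeff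
  rw [LinearMap.lTensor_add, LinearMap.lTensor_mul, LinearMap.lTensor_mul]
    at lTensor_seriesD_mapCoeff
  exact LinearMap.congr_fun lTensor_seriesD_mapCoeff Y

lemma LCAMod.chainDeriv_chainBracket (hD : ∀ m n : N, R.D (m * n) = R.D m * n + m * R.D n)
    (X Y : A ⊗[F] N⟦X⟧) :
    R.chainDeriv (R.chainBracket X Y)
      = R.chainBracket (R.chainDeriv X) Y + R.chainBracket X (R.chainDeriv Y) := by
  have chainDeriv_loopAct : R.chainDeriv (L.adjoint.loopAct (dX F N) X Y)
      = L.adjoint.loopAct (dX F N) (R.chainDeriv X) Y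
        + L.adjoint.loopAct (dX F N) X (R.chainDeriv Y) :=
    L.adjoint.lTensor_loopAct _ _ (R.seriesD_mul hD) R.commute_seriesD_dX X Y
  simp only [chainBracket_apply, map_add, map_sub, chainDeriv_loopAct, R.chainDeriv_anchorAct hD]
  abel

lemma LCAMod.mkQ_chainBracket_skew (X Y : A ⊗[F] N⟦X⟧) :
    (LinearMap.range (L.adjoint.totalD (dX F N))).mkQ (R.chainBracket X Y)
      = -(LinearMap.range (L.adjoint.totalD (dX F N))).mkQ (R.chainBracket Y X) := by
  simp only [chainBracket_apply, map_add, map_sub, L.mkQ_loopAct_skew (dX F N) X Y]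
  abel

lemma LCAMod.mkQ_chainBracket_jacobi
    (hact : R.ActsByDerivations) (X Y Z : A ⊗[F] N⟦X⟧) :
    (LinearMap.range (L.adjoint.totalD (dX F N))).mkQ (R.chainBracket X (R.chainBracket Y Z))
      = (LinearMap.range (L.adjoint.totalD (dX F N))).mkQ
        (R.chainBracket (R.chainBracket X Y) Z + R.chainBracket Y (R.chainBracket X Z)) := by
  have skew := L.mkQ_loopAct_skew (dX F N) (R.anchorAct A Z X) Y
  rw [← sub_eq_zero, ← map_sub, ← sub_eq_zero.mpr skew, sub_neg_eq_add, ← map_add]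
  congr 1
  rw [chainBracket_apply R X (R.chainBracket Y Z), chainBracket_apply R (R.chainBracket X Y) Z,
    chainBracket_apply R Y (R.chainBracket X Z), R.anchorAct_chainBracket hact,
    R.anchorAct_chainBracket hact, R.anchorAct_chainBracket hact]
  simp only [chainBracket_apply, map_add, map_sub, LinearMap.add_apply, LinearMap.sub_apply,
    R.anchorAct_loopAct hact, ← L.adjoint.loopAct_jacobi]
  abel

end Anchor

section OneChains

variable {F : Type*} [Field F] {A : Type*} [AddCommGroup A] [Module F A]
  {N : Type*} [CommRing N] [Algebra F N] {L : LCA F A} (R : LCAMod F L N)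

/-- The space of basic `1`-chains `Γ̃₁`, built from `N⟦X⟧` instead of the coefficient
families `ℕ → N` of `Gamma1`. -/
noncomputable abbrev LCA.OneChains (L : LCA F A) (N : Type*) [CommRing N] [Algebra F N] :=
  (A ⊗[F] N⟦X⟧) ⧸ LinearMap.range (L.adjoint.totalD (dX F N))

/-- The bracket induced by `chainBracket` on the basic `1`-chains. -/
noncomputable def LCAMod.oneChainBracket :
    L.OneChains N →ₗ[F] L.OneChains N →ₗ[F] L.OneChains N :=
  (R.chainBracket.compr₂ (LinearMap.range (L.adjoint.totalD (dX F N))).mkQ).liftQ₂ _ _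
    (by
      rintro _ ⟨X, rfl⟩
      refine LinearMap.ext fun Y => ?_
      simp [R.chainBracket_totalD_left])
    (by
      rintro _ ⟨Y, rfl⟩
      refine LinearMap.ext fun X => ?_
      simp [R.chainBracket_totalD_right, -map_add])

/-- The operator induced by `chainDeriv` on the basic `1`-chains. -/
noncomputable def LCAMod.oneChainDeriv : Module.End F (L.OneChains N) :=
  Submodule.mapQ _ _ R.chainDeriv (by
    rintro _ ⟨X, rfl⟩
    exact ⟨R.chainDeriv X, (R.chainDeriv_totalD X).symm⟩)

lemma LCAMod.oneChainBracket_mk (X Y : A ⊗[F] N⟦X⟧) :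
    R.oneChainBracket (Submodule.Quotient.mk X) (Submodule.Quotient.mk Y)
      = Submodule.Quotient.mk (R.chainBracket X Y) := rfl

lemma LCAMod.oneChainBracket_self [NeZero (2 : F)] (x : L.OneChains N) :
    R.oneChainBracket x x = 0 := by
  obtain ⟨X, rfl⟩ := Submodule.Quotient.mk_surjective _ x
  have two_smul_eq_zero : (2 : F) • R.oneChainBracket (Submodule.Quotient.mk X)
      (Submodule.Quotient.mk X) = 0 := by
    rw [two_smul, ← eq_neg_iff_add_eq_zero]
    exact R.mkQ_chainBracket_skew X X
  exact (smul_eq_zero_iff_right two_ne_zero).1 two_smul_eq_zero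

lemma LCAMod.oneChainBracket_jacobi (hact : R.ActsByDerivations) (x y z : L.OneChains N) :
    R.oneChainBracket x (R.oneChainBracket y z)
      = R.oneChainBracket (R.oneChainBracket x y) z
        + R.oneChainBracket y (R.oneChainBracket x z) := by
  obtain ⟨X, rfl⟩ := Submodule.Quotient.mk_surjective _ x
  obtain ⟨Y, rfl⟩ := Submodule.Quotient.mk_surjective _ y
  obtain ⟨Z, rfl⟩ := Submodule.Quotient.mk_surjective _ z
  exact R.mkQ_chainBracket_jacobi hact X Y Z

lemma LCAMod.oneChainDeriv_oneChainBracket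
    (hD : ∀ m n : N, R.D (m * n) = R.D m * n + m * R.D n) (x y : L.OneChains N) :
    R.oneChainDeriv (R.oneChainBracket x y)
      = R.oneChainBracket (R.oneChainDeriv x) y + R.oneChainBracket x (R.oneChainDeriv y) := by
  obtain ⟨X, rfl⟩ := Submodule.Quotient.mk_surjective _ x
  obtain ⟨Y, rfl⟩ := Submodule.Quotient.mk_surjective _ y
  exact congrArg Submodule.Quotient.mk (R.chainDeriv_chainBracket hD X Y)

end OneChains

section CoefficientFamilies

variable (F : Type*) [Field F] (A : Type*) [AddCommGroup A] [Module F A]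
  (N : Type*) [CommRing N] [Algebra F N]

/-- The identification of a power series with the family of its coefficients. -/
noncomputable def seriesEquiv : (ℕ → N) ≃ₗ[F] N⟦X⟧ where
  toFun := PowerSeries.mk
  invFun f k := PowerSeries.coeff k f
  map_add' f g := by ext; simp
  map_smul' r f := by ext; simp
  left_inv f := by ext; simp
  right_inv f := by ext; simp

/-- The identification of the two models of `A ⊗ N[[x]]`. -/
noncomputable def chainEquiv : A ⊗[F] (ℕ → N) ≃ₗ[F] A ⊗[F] N⟦X⟧ :=
  (seriesEquiv F N).lTensor A

variable {F A N}

@[simp]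
lemma coeff_seriesEquiv (f : ℕ → N) (k : ℕ) :
    PowerSeries.coeff k (seriesEquiv F N f) = f k :=
  PowerSeries.coeff_mk k f

@[simp]
lemma chainEquiv_tmul (a : A) (f : ℕ → N) :
    chainEquiv F A N (a ⊗ₜ f) = a ⊗ₜ seriesEquiv F N f := rfl

lemma seriesEquiv_derX (f : ℕ → N) : seriesEquiv F N (derX F f) = dX F N (seriesEquiv F N f) := by
  ext k
  simp only [coeff_seriesEquiv, Derivation.restrictScalars_apply, PowerSeries.coeff_derivative,
    derX, LinearMap.coe_mk, AddHom.coe_mk]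
  rw [← Nat.cast_succ, Nat.cast_smul_eq_nsmul, nsmul_eq_mul', Nat.cast_succ]

lemma seriesEquiv_g1ser (f g : ℕ → N) (p : ℕ) :
    seriesEquiv F N (g1ser f g p) = (dX F N)^[p] (seriesEquiv F N f) * seriesEquiv F N g := by
  ext k
  have iterate_dX : (dX F N)^[p] = (PowerSeries.derivative N)^[p] := rfl
  rw [PowerSeries.coeff_mul, Nat.sum_antidiagonal_eq_sum_range_succ_mk]
  simp [iterate_dX, g1ser, PowerSeries.coeff_iterate_derivative,
    Nat.add_descFactorial_eq_ascFactorial]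

variable {L : LCA F A} (R : LCAMod F L N)

lemma LCAMod.seriesEquiv_pairSer (a : A) (f g : ℕ → N) :
    seriesEquiv F N (pairSer F R f a g)
      = mapCoeff (R.anchor (a ⊗ₜ seriesEquiv F N f)) (seriesEquiv F N g) := by
  ext k
  have iterate_dX (p : ℕ) : (dX F N)^[p] = (PowerSeries.derivative N)^[p] := rfl
  simp only [coeff_seriesEquiv, coeff_mapCoeff, anchor_tmul, iterate_dX,
    PowerSeries.constantCoeff_iterate_derivative, pairSer]
  rw [R.finsum_act a (g k) (fun q x => (q.factorial : F) • (f q * x)) (by simp)]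
  refine Finsupp.sum_congr fun q _ => ?_
  rw [Nat.cast_smul_eq_nsmul, nsmul_eq_mul]
  ring

lemma chainEquiv_chainRel (t : A ⊗[F] (ℕ → N)) :
    chainEquiv F A N (chainRel F L N t) = L.adjoint.totalD (dX F N) (chainEquiv F A N t) := by
  induction t with
  | zero => simp
  | add t t' ht ht' => simp only [map_add, ht, ht']
  | tmul a f => simp [chainRel, seriesEquiv_derX, LCA.adjoint]

lemma LCAMod.chainEquiv_chainPartial (t : A ⊗[F] (ℕ → N)) :
    chainEquiv F A N (chainPartial F R t) = R.chainDeriv (chainEquiv F A N t) := by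
  induction t with
  | zero => simp
  | add t t' ht ht' => simp only [map_add, ht, ht']
  | tmul a f =>
    have seriesEquiv_coefD : seriesEquiv F N (coefD F R f) = mapCoeff R.D (seriesEquiv F N f) := by
      ext k
      simp [coefD]
    simp [chainPartial, chainDeriv, seriesD_apply, seriesEquiv_derX, seriesEquiv_coefD,
      TensorProduct.tmul_sub]

lemma LCAMod.chainEquiv_brkGen (a b : A) (f g : ℕ → N) :
    chainEquiv F A N (brkGen F R a f b g)
      = R.chainBracket (chainEquiv F A N (a ⊗ₜ f)) (chainEquiv F A N (b ⊗ₜ g)) := by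
  have bracket_finsum : ∑ᶠ p, L.br a b p ⊗ₜ[F] g1ser f g p
      = (L.adjoint.actPoly a b).sum fun p c => c ⊗ₜ g1ser f g p :=
    L.adjoint.finsum_act a b (fun p c => c ⊗ₜ[F] g1ser f g p) (by simp)
  rw [brkGen, bracket_finsum]
  simp [map_finsuppSum, seriesEquiv_g1ser, R.seriesEquiv_pairSer, chainBracket_apply,
    anchorAct_eq_lTensor]

/-- The identification of `Γ̃₁` with its model on power series. -/
noncomputable def gamma1Equiv (L : LCA F A) (N : Type*) [CommRing N] [Algebra F N] :
    Gamma1 F L N ≃ₗ[F] L.OneChains N :=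
  Submodule.Quotient.equiv _ _ (chainEquiv F A N) (by
    rw [← LinearMap.range_comp, ← LinearMap.range_comp_of_range_eq_top
      (L.adjoint.totalD (dX F N)) (LinearEquiv.range (chainEquiv F A N))]
    exact congrArg LinearMap.range (LinearMap.ext chainEquiv_chainRel))

lemma gamma1Equiv_mk (t : A ⊗[F] (ℕ → N)) :
    gamma1Equiv L N (Submodule.Quotient.mk t) = Submodule.Quotient.mk (chainEquiv F A N t) := rfl

end CoefficientFamilies

end LCC

open scoped TensorProduct in
open LCC in
theorem one_chains_lie_algebra_general
    {F : Type*} [Field F] [NeZero (2 : F)]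
    {A M : Type*} [AddCommGroup A] [Module F A] [CommRing M] [Algebra F M]
    (L : LCA F A) (R : LCAMod F L M)
    (hD : ∀ m n : M, R.D (m * n) = R.D m * n + m * R.D n)
    (hact : ∀ (a : A) (m n : M) (p : ℕ),
      R.act a (m * n) p = R.act a m p * n + m * R.act a n p) :
    ∃ Br : Gamma1 F L M →ₗ[F] Gamma1 F L M →ₗ[F] Gamma1 F L M,
      (∀ (a : A) (m : ℕ → M) (b : A) (n : ℕ → M),
        Br (Submodule.Quotient.mk (a ⊗ₜ[F] m)) (Submodule.Quotient.mk (b ⊗ₜ[F] n))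
          = Submodule.Quotient.mk (brkGen F R a m b n)) ∧
      (∀ x, Br x x = 0) ∧
      (∀ x y z, Br x (Br y z) = Br (Br x y) z + Br y (Br x z)) ∧
      ∃ DQ : Gamma1 F L M →ₗ[F] Gamma1 F L M,
        (∀ t : A ⊗[F] (ℕ → M),
          DQ (Submodule.Quotient.mk t) = Submodule.Quotient.mk (chainPartial F R t)) ∧
        (∀ x y, DQ (Br x y) = Br (DQ x) y + Br x (DQ y)) ∧
        (∀ x y, DQ x = 0 → DQ y = 0 → DQ (Br x y) = 0) := by
  let e := gamma1Equiv L M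
  let Br := (R.oneChainBracket.compl₁₂ e.toLinearMap e.toLinearMap).compr₂ e.symm.toLinearMap
  let DQ : Module.End F (Gamma1 F L M) := e.symm ∘ₗ R.oneChainDeriv ∘ₗ e
  have e_Br (x y : Gamma1 F L M) : e (Br x y) = R.oneChainBracket (e x) (e y) :=
    e.apply_symm_apply _
  have e_DQ (x : Gamma1 F L M) : e (DQ x) = R.oneChainDeriv (e x) := e.apply_symm_apply _
  have DQ_Br (x y : Gamma1 F L M) : DQ (Br x y) = Br (DQ x) y + Br x (DQ y) :=
    e.injective <| by simp only [map_add, e_Br, e_DQ, R.oneChainDeriv_oneChainBracket hD]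
  refine ⟨Br, fun a m b n => e.injective ?_, fun x => e.injective ?_,
    fun x y z => e.injective ?_, DQ, fun t => e.injective ?_, DQ_Br, fun x y hx hy => ?_⟩
  · rw [e_Br, gamma1Equiv_mk, gamma1Equiv_mk, gamma1Equiv_mk, R.oneChainBracket_mk,
      R.chainEquiv_brkGen]
  · rw [e_Br, R.oneChainBracket_self, map_zero]
  · simp only [map_add, e_Br]
    exact R.oneChainBracket_jacobi hact (e x) (e y) (e z)
  · rw [e_DQ, gamma1Equiv_mk, gamma1Equiv_mk, R.chainEquiv_chainPartial]
    rfl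
  · rw [DQ_Br, hx, hy, map_zero, map_zero, LinearMap.zero_apply, add_zero]

open scoped TensorProduct in
open LCC in
/-- **Statement 11.** Let `A` be a Lie conformal algebra and `M` an `A`-module with a
commutative associative product on which `∂^M` and all `a_λ` act by derivations.
(a) The bracket
`[a⊗m(x), b⊗n(x)] = [a_{∂_{x₁}}b] ⊗ m(x₁)n(x)|_{x₁=x} − a ⊗ ⟨n(x₁), b_{λ₁} m(x)⟩
+ b ⊗ ⟨m(x₁), a_{λ₁} n(x)⟩` on `A ⊗ M[[x]]` induces a well-defined Lie algebra
bracket on `𝔤 = ΠΓ̃₁(A,M) = (A ⊗ M[[x]])/(∂⊗1 + 1⊗∂_x)(A ⊗ M[[x]])`.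
(b) The operator `∂(a⊗m(x)) = a⊗(∂^M − ∂_x)m(x)` is a derivation of this Lie
algebra, and `𝔤^∂ = ΠΓ₁(A,M) = Ker ∂` is a Lie subalgebra of `𝔤`. -/
theorem one_chains_lie_algebra
    {F : Type*} [Field F] [CharZero F]
    {A M : Type*} [AddCommGroup A] [Module F A] [CommRing M] [Algebra F M]
    (L : LCA F A) (R : LCAMod F L M)
    (hD : ∀ m n : M, R.D (m * n) = R.D m * n + m * R.D n)
    (hact : ∀ (a : A) (m n : M) (p : ℕ),
      R.act a (m * n) p = R.act a m p * n + m * R.act a n p) :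
    ∃ Br : Gamma1 F L M →ₗ[F] Gamma1 F L M →ₗ[F] Gamma1 F L M,
      -- the bracket is induced by the formula on generators
      (∀ (a : A) (m : ℕ → M) (b : A) (n : ℕ → M),
        Br (Submodule.Quotient.mk (a ⊗ₜ[F] m)) (Submodule.Quotient.mk (b ⊗ₜ[F] n))
          = Submodule.Quotient.mk (brkGen F R a m b n)) ∧
      -- it is a Lie algebra bracket
      (∀ x, Br x x = 0) ∧
      (∀ x y z, Br x (Br y z) = Br (Br x y) z + Br y (Br x z)) ∧
      -- (b): ∂ descends to Γ̃₁, is a derivation of the bracket, and Ker ∂ = ΠΓ₁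
      -- is a Lie subalgebra
      ∃ DQ : Gamma1 F L M →ₗ[F] Gamma1 F L M,
        (∀ t : A ⊗[F] (ℕ → M),
          DQ (Submodule.Quotient.mk t) = Submodule.Quotient.mk (chainPartial F R t)) ∧
        (∀ x y, DQ (Br x y) = Br (DQ x) y + Br x (DQ y)) ∧
        (∀ x y, DQ x = 0 → DQ y = 0 → DQ (Br x y) = 0) :=
  one_chains_lie_algebra_general L R hD hact
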